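/- Let p, q be idempotents in a ring R with p − q Drazin invertible. Then p − qp is Drazin invertible with (p − qp)^D = ((p−q)^D)³ p. -/

import Mathlib

/-- `b` is the Drazin inverse of `a`. -/
def IsDrazinInverse {R : Type*} [Ring R] (a b : R) : Prop :=
  a * b = b * a ∧ b * a * b = b ∧ IsNilpotent (a - a * a * b)

namespace IsDrazinInverse

variable {R : Type*} [Ring R] {a b c : R}

theorem isIdempotentElem_mul (h : IsDrazinInverse a b) : IsIdempotentElem (a * b) := by
  obtain ⟨-, hbab, -⟩ := h
  change a * b * (a * b) = a * b
  rw [mul_assoc, ← mul_assoc b, hbab]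

theorem exists_pow_mul_one_sub_eq_zero (h : IsDrazinInverse a b) :
    ∃ k : ℕ, a ^ k * (1 - a * b) = 0 := by
  have hf := h.isIdempotentElem_mul.one_sub
  obtain ⟨hab, -, k, hk⟩ := h
  have hcomm : Commute a (1 - a * b) :=
    (Commute.one_right a).sub_right ((Commute.refl a).mul_right hab)
  refine ⟨k, ?_⟩
  have hn : a - a * a * b = a * (1 - a * b) := by noncomm_ring
  rw [hn, hcomm.mul_pow] at hk
  rw [← hf.pow_succ_eq k, pow_succ, ← mul_assoc, hk, zero_mul]

/-- The Drazin inverse of `a` lies in the double commutant of `a`. -/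
theorem commute_right (h : IsDrazinInverse a b) (hc : Commute c a) : Commute c b := by
  obtain ⟨k, hk⟩ := h.exists_pow_mul_one_sub_eq_zero
  have he := h.isIdempotentElem_mul
  obtain ⟨hab, hbab, -⟩ := h
  have hab' : Commute a b := hab
  have hcomm : Commute (a ^ k) (1 - a * b) :=
    ((Commute.one_right a).sub_right ((Commute.refl a).mul_right hab)).pow_left k
  have hk' : (1 - a * b) * a ^ k = 0 := by rw [← hcomm.eq, hk]
  have hck : c * a ^ k = a ^ k * c := (hc.pow_right k).eq
  have hpow : a * b * (a ^ k * b ^ k) = a * b := by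
    rw [← hab'.mul_pow, ← pow_succ', he.pow_succ_eq]
  have hpow' : a ^ k * b ^ k * (a * b) = a * b := by
    rw [← hab'.mul_pow, ← pow_succ, he.pow_succ_eq]
  have hswap : b ^ k * a ^ k = a ^ k * b ^ k := (hab'.symm.pow_pow k k).eq
  have hleft : a * b * c * (1 - a * b) = 0 := by
    calc a * b * c * (1 - a * b)
        = a * b * b ^ k * (a ^ k * c) * (1 - a * b) := by
          rw [← mul_assoc _ _ c, mul_assoc (a * b) (b ^ k), hswap, hpow]
      _ = a * b * b ^ k * c * (a ^ k * (1 - a * b)) := by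
          rw [← hck]; simp only [mul_assoc]
      _ = 0 := by rw [hk, mul_zero]
  have hright : (1 - a * b) * c * (a * b) = 0 := by
    calc (1 - a * b) * c * (a * b)
        = (1 - a * b) * (c * a ^ k) * b ^ k * (a * b) := by
          conv_lhs => arg 2; rw [← hpow']
          simp only [mul_assoc]
      _ = (1 - a * b) * a ^ k * c * b ^ k * (a * b) := by
          rw [hck]; simp only [mul_assoc]
      _ = 0 := by rw [hk']; simp only [zero_mul]
  have hec : a * b * c = c * (a * b) := by
    have h1 : a * b * c = a * b * c * (a * b) := by
      rwa [mul_sub, mul_one, sub_eq_zero] at hleft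
    have h2 : c * (a * b) = a * b * c * (a * b) := by
      rwa [sub_mul, sub_mul, one_mul, sub_eq_zero] at hright
    rw [h1, h2]
  have hbe : b * (a * b) = b := by rw [← mul_assoc, hbab]
  have heb : a * b * b = b := by rw [hab, hbab]
  symm
  calc b * c = b * (a * b * c) := by rw [← mul_assoc, hbe]
    _ = b * (c * a) * b := by rw [hec]; simp only [mul_assoc]
    _ = a * b * c * b := by rw [hc.eq, hab]; simp only [mul_assoc]
    _ = c * b := by rw [hec, mul_assoc, heb]

theorem sq (h : IsDrazinInverse a b) : IsDrazinInverse (a ^ 2) (b ^ 2) := by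
  have hf := h.isIdempotentElem_mul
  obtain ⟨hab, hbab, hnil⟩ := h
  have hab' : Commute a b := hab
  refine ⟨(hab'.pow_pow 2 2).eq, ?_, ?_⟩
  · rw [← hab'.symm.mul_pow, ← ((Commute.refl b).mul_left hab').mul_pow, hbab]
  · have hcomm : Commute a (1 - a * b) :=
      (Commute.one_right a).sub_right ((Commute.refl a).mul_right hab)
    have hn : a ^ 2 - a ^ 2 * a ^ 2 * b ^ 2 = (a - a * a * b) ^ 2 := by
      have h1 : a - a * a * b = a * (1 - a * b) := by noncomm_ring
      rw [h1, hcomm.mul_pow, pow_two (1 - a * b), hf.one_sub.eq, mul_assoc, ← hab'.mul_pow,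
        pow_two (a * b), hf.eq, mul_sub, mul_one]
    rw [hn]
    exact hnil.pow_of_pos two_ne_zero

end IsDrazinInverse

theorem stmt9 {R : Type*} [Ring R] (p q d : R) (hp : p * p = p) (hq : q * q = q)
    (hd : IsDrazinInverse (p - q) d) :
    IsDrazinInverse (p - q * p) (d ^ 3 * p) := by
  have hps : Commute p ((p - q) ^ 2) := by
    simp only [Commute, SemiconjBy, pow_two, mul_sub, sub_mul, hq, hp, mul_assoc]
    simp only [← mul_assoc, hp]
    abel
  have hpap : p * (p - q) * p = (p - q) ^ 2 * p := by
    simp only [pow_two, mul_sub, sub_mul, hq, hp, mul_assoc]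
    abel
  have hx : p - q * p = (p - q) * p := by rw [sub_mul, hp]
  have hpt : Commute p (d ^ 2) := hd.sq.commute_right hps
  rw [hx]
  generalize p - q = a at *
  obtain ⟨had, hdad, hnil⟩ := hd
  have had' : Commute a d := had
  have hd2a : d ^ 2 * a = d := by rw [pow_two, mul_assoc, ← had, ← mul_assoc, hdad]
  have hpdp : p * d * p = d * a * p := by
    calc p * d * p = p * d ^ 2 * a * p := by rw [mul_assoc p (d ^ 2), hd2a]
      _ = d ^ 2 * (p * a * p) := by rw [hpt.eq]; simp only [mul_assoc]
      _ = d ^ 2 * a * a * p := by rw [hpap, pow_two a]; simp only [mul_assoc]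
      _ = d * a * p := by rw [hd2a]
  have hpd3p : p * d ^ 3 * p = d ^ 3 * a * p := by
    calc p * d ^ 3 * p = p * d ^ 2 * d * p := by rw [pow_succ d 2, ← mul_assoc]
      _ = d ^ 2 * (p * d * p) := by rw [hpt.eq]; simp only [mul_assoc]
      _ = d ^ 3 * a * p := by rw [hpdp, pow_succ d 2]; simp only [mul_assoc]
  have hd3a : d ^ 3 * a = d ^ 2 := by rw [pow_succ', mul_assoc, hd2a, pow_two]
  have hxb : a * p * (d ^ 3 * p) = d * p := by
    calc a * p * (d ^ 3 * p) = a * (p * d ^ 3 * p) := by simp only [mul_assoc]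
      _ = a * d ^ 2 * p := by rw [hpd3p, hd3a, mul_assoc]
      _ = d * p := by rw [(had'.pow_right 2).eq, hd2a]
  have hbx : d ^ 3 * p * (a * p) = d * p := by
    calc d ^ 3 * p * (a * p) = d ^ 3 * (p * a * p) := by simp only [mul_assoc]
      _ = d ^ 3 * a * a * p := by rw [hpap, pow_two a]; simp only [mul_assoc]
      _ = d * p := by rw [hd3a, hd2a]
  refine ⟨hxb.trans hbx.symm, ?_, ?_⟩
  · calc d ^ 3 * p * (a * p) * (d ^ 3 * p) = d * (p * d ^ 3 * p) := by
          rw [hbx]; simp only [mul_assoc]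
      _ = d ^ 3 * p := by rw [hpd3p, hd3a, ← mul_assoc, ← pow_succ']
  · have hn : a * p - a * p * (a * p) * (d ^ 3 * p) = (a - a * a * d) * p := by
      rw [mul_assoc (a * p), hxb, sub_mul]
      congr 1
      calc a * p * (d * p) = a * (p * d * p) := by simp only [mul_assoc]
        _ = a * a * d * p := by rw [hpdp, ← had]; simp only [mul_assoc]
    have hpnp : p * (a - a * a * d) * p = a * (a - a * a * d) * p := by
      have hpe : Commute p (a * d) := by
        have he : a ^ 2 * d ^ 2 = a * d := by
          rw [pow_two a, mul_assoc, (had'.pow_right 2).eq, hd2a]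
        exact he ▸ hps.mul_right hpt
      have h1 : p * (a * a * d) * p = a * (a * a * d) * p := by
        calc p * (a * a * d) * p = p * a * (a * d * p) := by simp only [mul_assoc]
          _ = p * a * p * (a * d) := by rw [← hpe.eq]; simp only [mul_assoc]
          _ = a * a * (p * (a * d)) := by rw [hpap, pow_two]; simp only [mul_assoc]
          _ = a * (a * a * d) * p := by rw [hpe.eq]; simp only [mul_assoc]
      rw [mul_sub, sub_mul, h1, hpap, mul_sub, sub_mul, pow_two]
    have hcomm : Commute a (a - a * a * d) :=
      (Commute.refl a).sub_right (((Commute.refl a).mul_right (Commute.refl a)).mul_right had)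
    have hpow (k : ℕ) : ((a - a * a * d) * p) ^ (k + 1) =
        (a - a * a * d) * (a * (a - a * a * d)) ^ k * p := by
      induction k with
      | zero => simp
      | succ k ih =>
        rw [pow_succ, ih, pow_succ _ k]
        simp only [mul_assoc] at hpnp ⊢
        rw [hpnp]
    obtain ⟨k, hk⟩ := hnil
    rw [hn]
    refine ⟨k + 1, ?_⟩
    rw [hpow, hcomm.mul_pow, hk, mul_zero, mul_zero, zero_mul]
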